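/- arXiv:math/0212003 — 4 statements merged into one kernel-verified Lean document; each statement's English description precedes it below -/
import Mathlib

section
/- Let L act on the finite group G by automorphisms, let g ∈ G, and consider the set X = {(d,e,f) ∈ G×G×G : def = g}. Consider two equivalence relations on X: in the first, (d,e,f) ~ (d',e',f') iff they lie in the same orbit under the actions of L_g on the pair (de,f) together with, for each f, the action of L_{gf^{-1}} = L_{de} on the pair (d,e); in the second, under the actions of L_g on the pair (d,ef) together with, for each d, the action of L_{d^{-1}g} = L_{ef} on the pair (e,f). Then the bijection X → X given by (d,e,f) ↦ (gfg^{-1}, d, e) carries equivalence classes of the first relation bijectively onto equivalence classes of the second; consequently a set of representatives for the first set of orbits yields, via this map, a set of representatives for the second. -/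
section

variable (L G : Type) [Group L] [Group G] [MulDistribMulAction L G]

/-- The first relation on triples `(d,e,f)` with `def = g`: it is generated by the action
of `L_g` on the pairs `(de, f)` (the diagonal action on triples) together with, for each
`f`, the action of the stabilizer `L_{gf⁻¹} = L_{de}` on the pairs `(d,e)`.  The orbit
equivalence relation is `Relation.EqvGen` of this relation. -/
def tripleRelFirst (g : G) (p q : G × G × G) : Prop :=
  (∃ x : L, x • g = g ∧ q = (x • p.1, x • p.2.1, x • p.2.2)) ∨
  (∃ y : L, y • (p.1 * p.2.1) = p.1 * p.2.1 ∧ q = (y • p.1, y • p.2.1, p.2.2))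

/-- The second relation on triples `(d,e,f)` with `def = g`: it is generated by the action
of `L_g` on the pairs `(d, ef)` (the diagonal action on triples) together with, for each
`d`, the action of the stabilizer `L_{d⁻¹g} = L_{ef}` on the pairs `(e,f)`. -/
def tripleRelSecond (g : G) (p q : G × G × G) : Prop :=
  (∃ x : L, x • g = g ∧ q = (x • p.1, x • p.2.1, x • p.2.2)) ∨
  (∃ y : L, y • (p.2.1 * p.2.2) = p.2.1 * p.2.2 ∧ q = (p.1, y • p.2.1, y • p.2.2))

end

/-!
For `g` fixed by `x`, conjugation by `g` commutes with the action of `x`, so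
`(d, e, f) ↦ (gfg⁻¹, d, e)` is equivariant for `L_g`. It moves the pair `(d, e)`, on which `L_{de}`
acts in the first relation, to the last two places, where `L_{de}` acts in the second. It is
therefore an isomorphism between the two generating relations, already on all of `G × G × G`, and
hence between the equivalence relations they generate.
-/

section EqvGen

variable {α β : Type*} {r : α → α → Prop} {s : β → β → Prop} {a b : α}

theorem eqvGen_map (f : r →r s) (h : Relation.EqvGen r a b) : Relation.EqvGen s (f a) (f b) :=
  Quot.eqvGen_exact <| congrArg (Quot.map f fun _ _ => f.map_rel) (Quot.eqvGen_sound h)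

theorem eqvGen_map_iff (e : r ≃r s) : Relation.EqvGen s (e a) (e b) ↔ Relation.EqvGen r a b :=
  ⟨fun h => by simpa using eqvGen_map e.symm.toRelEmbedding.toRelHom h,
    eqvGen_map e.toRelEmbedding.toRelHom⟩

end EqvGen

section Representatives

variable {α β : Type*} {r : α → α → Prop} {s : β → β → Prop} {X T : Set α} {Y : Set β} {f : α → β}

/-- `T` is a set of representatives in `X` for `r`: a subset of `X` that meets the `r`-class of each
point of `X` exactly once. The relation lives on the ambient type and need not be an equivalence. -/
def IsRepresentativeSet (r : α → α → Prop) (X T : Set α) : Prop :=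
  T ⊆ X ∧ ∀ p ∈ X, ∃! q, q ∈ T ∧ r p q

theorem IsRepresentativeSet.image (hT : IsRepresentativeSet r X T) (hmaps : Set.MapsTo f X Y)
    (hsurj : Set.SurjOn f X Y) (hrel : ∀ p ∈ X, ∀ q ∈ X, r p q ↔ s (f p) (f q)) :
    IsRepresentativeSet s Y (f '' T) := by
  obtain ⟨hTX, hrep⟩ := hT
  refine ⟨(hmaps.mono_left hTX).image_subset, fun y hy => ?_⟩
  obtain ⟨p, hp, rfl⟩ := hsurj hy
  obtain ⟨q, ⟨hq, hpq⟩, hunique⟩ := hrep p hp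
  refine ⟨f q, ⟨Set.mem_image_of_mem f hq, (hrel p hp q (hTX hq)).1 hpq⟩, ?_⟩
  rintro _ ⟨⟨q', hq', rfl⟩, hpq'⟩
  exact congrArg f (hunique q' ⟨hq', (hrel p hp q' (hTX hq')).2 hpq'⟩)

end Representatives

section ConjRotate

variable {G : Type*} [Group G]

/-- The bijection `(d, e, f) ↦ (gfg⁻¹, d, e)` of the theorem, as a permutation of all triples. -/
@[simps]
def conjRotate (g : G) : G × G × G ≃ G × G × G where
  toFun p := (g * p.2.2 * g⁻¹, p.1, p.2.1)
  invFun p := (p.2.1, p.2.2, g⁻¹ * p.1 * g)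
  left_inv p := by simp [mul_assoc]
  right_inv p := by simp [mul_assoc]

theorem conj_mul_mul_eq_self_iff (g d e f : G) : g * f * g⁻¹ * d * e = g ↔ d * e * f = g := by
  calc
    g * f * g⁻¹ * d * e = g ↔ f * (g⁻¹ * (d * e)) = 1 := by
      simp only [mul_assoc, mul_eq_left]
    _ ↔ g⁻¹ * (d * e) * f = 1 := mul_eq_one_comm
    _ ↔ d * e * f = g := by rw [mul_assoc, inv_mul_eq_one, eq_comm]

theorem conjRotate_bijOn (g : G) :
    Set.BijOn (conjRotate g) {p | p.1 * p.2.1 * p.2.2 = g} {p | p.1 * p.2.1 * p.2.2 = g} :=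
  (conjRotate g).bijOn fun p => conj_mul_mul_eq_self_iff g p.1 p.2.1 p.2.2

theorem conjRotate_smul {L : Type*} [Monoid L] [MulDistribMulAction L G] {g : G} {x : L}
    (hx : x • g = g) (p : G × G × G) : conjRotate g (x • p) = x • conjRotate g p := by
  simp [smul_mul', smul_inv', hx]

end ConjRotate

section TripleRel

variable {L G : Type} [Group L] [Group G] [MulDistribMulAction L G] {g : G} {p q : G × G × G}

theorem tripleRelSecond_conjRotate_iff :
    tripleRelSecond L G g (conjRotate g p) (conjRotate g q) ↔ tripleRelFirst L G g p q := by
  have diagonal_iff (x : L) (hx : x • g = g) :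
      conjRotate g q = x • conjRotate g p ↔ q = x • p := by
    rw [← conjRotate_smul hx, (conjRotate g).apply_eq_iff_eq]
  have pair_iff (y : L) :
      conjRotate g q = (g * p.2.2 * g⁻¹, y • p.1, y • p.2.1) ↔
        q = (y • p.1, y • p.2.1, p.2.2) :=
    (conjRotate g).apply_eq_iff_eq (y := (y • p.1, y • p.2.1, p.2.2))
  exact or_congr (exists_congr fun x => and_congr_right (diagonal_iff x))
    (exists_congr fun y => and_congr_right fun _ => pair_iff y)

theorem eqvGen_tripleRelSecond_conjRotate_iff :
    Relation.EqvGen (tripleRelSecond L G g) (conjRotate g p) (conjRotate g q) ↔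
      Relation.EqvGen (tripleRelFirst L G g) p q :=
  eqvGen_map_iff ⟨conjRotate g, tripleRelSecond_conjRotate_iff⟩

end TripleRel

/-- The set `X = {(d,e,f) ∈ G×G×G : def = g}` carries two orbit equivalence relations,
and the bijection `(d,e,f) ↦ (gfg⁻¹, d, e)` of `X` carries the equivalence classes of the
first relation bijectively onto those of the second; consequently a set of representatives
for the first relation yields, via this map, a set of representatives for the second. -/
theorem triple_orbit_correspondence
    (L G : Type) [Group L] [Group G] [MulDistribMulAction L G] (g : G) :
    let X : Set (G × G × G) := {p | p.1 * p.2.1 * p.2.2 = g}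
    let φ : G × G × G → G × G × G := fun p => (g * p.2.2 * g⁻¹, p.1, p.2.1)
    -- `φ` maps `X` bijectively onto itself
    Set.BijOn φ X X ∧
    -- `φ` carries the first equivalence relation to the second
    (∀ p ∈ X, ∀ q ∈ X,
      Relation.EqvGen (tripleRelFirst L G g) p q ↔
        Relation.EqvGen (tripleRelSecond L G g) (φ p) (φ q)) ∧
    -- hence a set of representatives for the first relation is carried by `φ` to a set of
    -- representatives for the second relation
    (∀ T : Set (G × G × G), T ⊆ X →
      (∀ p ∈ X, ∃! q, q ∈ T ∧ Relation.EqvGen (tripleRelFirst L G g) p q) →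
      (φ '' T ⊆ X ∧
        ∀ p ∈ X, ∃! q, q ∈ φ '' T ∧ Relation.EqvGen (tripleRelSecond L G g) p q)) := by
  intro X φ
  have hbij : Set.BijOn φ X X := conjRotate_bijOn g
  have hrel : ∀ p ∈ X, ∀ q ∈ X, Relation.EqvGen (tripleRelFirst L G g) p q ↔
      Relation.EqvGen (tripleRelSecond L G g) (φ p) (φ q) :=
    fun _ _ _ _ => eqvGen_tripleRelSecond_conjRotate_iff.symm
  exact ⟨hbij, hrel, fun T hTX hrep =>
    IsRepresentativeSet.image ⟨hTX, hrep⟩ hbij.mapsTo hbij.surjOn hrel⟩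
end

section
/- Let R = S#_σG be a crossed product over a field k, g ∈ G with centralizer C(g), and let C denote the conjugacy class of g. Then the Δ-module R_C := ⊕_{h∈C} S·h̄ is isomorphic both to the induced module Δ ⊗_{Δ(C(g))} S·ḡ and to the coinduced module Hom_{Δ(C(g))}(Δ, S·ḡ) (where Δ acts on the latter by ((r_0⊗r_1)·f)(s_0⊗s_1) = f(s_0 r_0 ⊗ r_1 s_1)); an explicit Δ-module isomorphism R_C → Hom_{Δ(C(g))}(Δ, S·ḡ) is given by h̄ r ḡ (h̄)^{-1} ↦ (((h̄)^{-1} ⊗ h̄) ↦ r·ḡ), where h ranges over a set of coset representatives for C(g) in G. -/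
open scoped TensorProduct DirectSum

set_option synthInstance.maxHeartbeats 1000000
set_option maxHeartbeats 4000000

/-- A crossed product `R = S #_σ G` of a `k`-algebra `S` by a finite group `G` acting by
automorphisms, with respect to a normalized two-cocycle `σ` with values in the units of
the center of `S`:  `R` contains `S` as a subalgebra via `emb`, contains invertible
elements `ḡ = u g` for `g ∈ G` with `ḡ s ḡ⁻¹ = ᵍs`, `ḡ h̄ = σ(g,h) (gh)‾`, and
`R = ⊕_{g ∈ G} S·ḡ` as a `k`-module. -/
structure CrossedProduct (k : Type) [Field k] (S : Type) [Ring S] [Algebra k S]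
    (G : Type) [Group G] [Fintype G]
    (act : G →* (S ≃ₐ[k] S)) (σ : G → G → S)
    (R : Type) [Ring R] [Algebra k R] where
  emb : S →ₐ[k] R
  u : G → Rˣ
  sigma_central : ∀ (g h : G) (s : S), σ g h * s = s * σ g h
  sigma_isUnit : ∀ g h, IsUnit (σ g h)
  cocycle : ∀ g h l, act g (σ h l) * σ g (h * l) = σ g h * σ (g * h) l
  sigma_normal₁ : ∀ g, σ g 1 = 1
  sigma_normal₂ : ∀ g, σ 1 g = 1
  u_conj : ∀ (g : G) (s : S), (u g : R) * emb s = emb (act g s) * (u g : R)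
  u_mul : ∀ g h : G, (u g : R) * (u h : R) = emb (σ g h) * (u (g * h) : R)
  u_one : u 1 = 1
  basis : Function.Bijective fun f : G → S => ∑ g, emb (f g) * ((u g : R))

section

variable (k : Type) [Field k] (S : Type) [Ring S] [Algebra k S]
  (G : Type) [Group G] [Fintype G]
  (act : G →* (S ≃ₐ[k] S)) (σ : G → G → S)
  (R : Type) [Ring R] [Algebra k R]

/-- `R` is a module over its enveloping algebra `R^e = R ⊗ R^{op}`, by left and right
multiplication. -/
noncomputable instance : Module (R ⊗[k] Rᵐᵒᵖ) R := TensorProduct.Algebra.module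

/-- The subalgebra `Δ(H) = ⊕_{h ∈ H} S·h̄ ⊗ S·(h̄)⁻¹` of `R^e = R ⊗ R^{op}`, for a
subgroup `H ≤ G`. -/
noncomputable def Delta (cp : CrossedProduct k S G act σ R) (H : Subgroup G) :
    Subalgebra k (R ⊗[k] Rᵐᵒᵖ) :=
  Algebra.adjoin k {z | ∃ (h : H) (s s' : S),
    z = (cp.emb s * (cp.u h : R)) ⊗ₜ[k] (MulOpposite.op (cp.emb s' * ((cp.u h)⁻¹ : Rˣ)))}

end

/-- A copy of `S`, recording the `k`-submodule `S·ḡ ⊆ R` (for `g ∈ G`): the map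
`s ↦ s·ḡ` identifies `STwist S g` with `S·ḡ`.  For `g` centralized by a subgroup `H`,
`S·ḡ` is a `Δ(H)`-submodule of `R`; the corresponding `Δ(H)`-module structures on
`STwist S g` are hypothesized below, pinned down by this identification. -/
@[ext] structure STwist (S : Type) {G : Type} (g : G) : Type where
  ofS ::
  toS : S

namespace STwist

variable {S G : Type} [Ring S] (g : G)

/-- `STwist S g ≃ S`. -/
def equiv : STwist S g ≃ S where
  toFun := toS
  invFun := ofS
  left_inv := fun _ => rfl
  right_inv := fun _ => rfl

instance : AddCommGroup (STwist S g) := (equiv g).addCommGroup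

@[simp] lemma toS_add (a b : STwist S g) : (a + b).toS = a.toS + b.toS := rfl

end STwist

section

variable (k : Type) [Field k] (S : Type) [Ring S] [Algebra k S]
  (G : Type) [Group G] [Fintype G]
  (act : G →* (S ≃ₐ[k] S)) (σ : G → G → S)
  (R : Type) [Ring R] [Algebra k R]

/-- The `k`-span `S·ḡ ⊆ R`. -/
noncomputable def SgSpan (cp : CrossedProduct k S G act σ R) (g : G) : Submodule k R :=
  Submodule.span k {z : R | ∃ s : S, z = cp.emb s * (cp.u g : R)}

/-- The `k`-span `R_C = ⊕_{h ∈ C} S·h̄ ⊆ R`, for `C` the conjugacy class of `g`. -/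
noncomputable def Rclass (cp : CrossedProduct k S G act σ R) (g : G) : Submodule k R :=
  Submodule.span k {z : R | ∃ (h : G) (s : S), IsConj g h ∧ z = cp.emb s * (cp.u h : R)}

/-- The coinduced module `Hom_{Δ(C(g))}(Δ, S·ḡ)`: additive, `k`-linear, `S·ḡ`-valued
functions on `Δ = Δ(G)` which are left `Δ(C(g))`-linear. -/
def CoInd (cp : CrossedProduct k S G act σ R) (g : G)
    (hle : Delta k S G act σ R cp (Subgroup.centralizer {g}) ≤ Delta k S G act σ R cp ⊤) :
    Type :=
  {f : ↥(Delta k S G act σ R cp ⊤) → R //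
    (∀ w w', f (w + w') = f w + f w') ∧
    (∀ (c : k) (w), f (c • w) = c • f w) ∧
    (∀ w, f w ∈ SgSpan k S G act σ R cp g) ∧
    (∀ (z : ↥(Delta k S G act σ R cp (Subgroup.centralizer {g}))) (w),
      f (Subalgebra.inclusion hle z * w) = ((z : R ⊗[k] Rᵐᵒᵖ)) • f w)}

end

/-!
Write `x̃ = x̄ ⊗ x̄⁻¹ ∈ Δ` and let `π : R_C → S·ḡ` be the projection, which is `Δ(C(g))`-linear.
Choose `x_h` with `x_h g x_h⁻¹ = h` for each `h ∈ C`. Then `x̃_h` carries `S·ḡ` onto `S·h̄`, so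
`n = ∑ₕ x̃_h π(x̃_h⁻¹ n)` for `n ∈ R_C`, while `Δ = ⊕ₕ x̃_h Δ(C(g)) = ⊕ₕ Δ(C(g)) x̃_h⁻¹` because the
`x_h` represent the cosets of `C(g)`. Hence a `Δ(C(g))`-linear `φ` on `S·ḡ` extends uniquely to
`R_C`, by `n ↦ ∑ₕ x̃_h φ(π(x̃_h⁻¹ n))`, and a coinduced `f` equals `d ↦ π(d n)` for exactly one `n`,
namely `n = ∑ₕ x̃_h f(x̃_h⁻¹)`.
-/

section DualCosetSystem

variable {A D N N₀ M I : Type*} [Semiring A] [Semiring D] {j : A →+* D}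
  [AddCommMonoid N] [Module D N] [AddCommMonoid N₀] [Module A N₀]
  [AddCommMonoid M] [Module D M] [Fintype I]

/-- A system of coset representatives exhibiting a `D`-module `N` as both induced and coinduced
from an `A`-module `N₀` along `j : A → D`: the elements `t i` generate `D` as a right `A`-module,
the elements `s i` generate it as a left `A`-module, and they are dual to each other with respect
to the embedding `ι : N₀ → N` and the projection `π : N → N₀`. -/
structure IsDualCosetSystem (ι : N₀ →ₛₗ[j] N) (π : N →+ N₀) (s t : I → D) : Prop where
  proj_smul (a : A) (n : N) : π (j a • n) = a • π n
  proj_smul_self (i : I) (v : N₀) : π (s i • t i • ι v) = v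
  proj_smul_of_ne {i l : I} (h : i ≠ l) (v : N₀) : π (s i • t l • ι v) = 0
  sum_smul_proj (n : N) : ∑ i, t i • ι (π (s i • n)) = n
  closure_left : AddSubmonoid.closure {d | ∃ a i, j a * s i = d} = ⊤
  closure_right : AddSubmonoid.closure {d | ∃ a i, t i * j a = d} = ⊤

namespace IsDualCosetSystem

variable {ι : N₀ →ₛₗ[j] N} {π : N →+ N₀} {s t : I → D}

lemma proj_smul_sum (h : IsDualCosetSystem ι π s t) (i : I) (v : I → N₀) :
    π (s i • ∑ l, t l • ι (v l)) = v i := by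
  rw [Finset.smul_sum, map_sum, Fintype.sum_eq_single i fun l hl ↦ h.proj_smul_of_ne hl.symm _,
    h.proj_smul_self]

theorem existsUnique_forall_proj_smul_eq (h : IsDualCosetSystem ι π s t) (f : D →+ N₀)
    (hf : ∀ a d, f (j a * d) = a • f d) : ∃! n : N, ∀ d, π (d • n) = f d := by
  refine ⟨∑ i, t i • ι (f (s i)), ?_, fun n hn ↦ ?_⟩
  · suffices π.comp ((smulAddHom D N).flip (∑ i, t i • ι (f (s i)))) = f from
      DFunLike.congr_fun this
    refine AddMonoidHom.eq_of_eqOn_denseM h.closure_left ?_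
    rintro _ ⟨a, i, rfl⟩
    change π ((j a * s i) • ∑ i, t i • ι (f (s i))) = _
    rw [mul_smul, h.proj_smul, h.proj_smul_sum, hf]
  · simp only [← hn, h.sum_smul_proj]

lemma sum_smul_map_proj_smul (h : IsDualCosetSystem ι π s t) (φ : N₀ →ₛₗ[j] M) (d : D) (v : N₀) :
    ∑ i, t i • φ (π (s i • d • ι v)) = d • φ v := by
  let extend : N →+ M :=
    ∑ i, (smulAddHom D M (t i)).comp (φ.toAddMonoidHom.comp (π.comp (smulAddHom D N (s i))))
  have extend_apply (n : N) : extend n = ∑ i, t i • φ (π (s i • n)) := by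
    simp [extend]
  rw [← extend_apply]
  suffices extend.comp ((smulAddHom D N).flip (ι v)) = (smulAddHom D M).flip (φ v) from
    DFunLike.congr_fun this d
  refine AddMonoidHom.eq_of_eqOn_denseM h.closure_right ?_
  rintro _ ⟨a, i, rfl⟩
  change extend ((t i * j a) • ι v) = (t i * j a) • φ v
  rw [extend_apply, mul_smul, mul_smul, ← map_smulₛₗ ι, ← map_smulₛₗ φ,
    Fintype.sum_eq_single i fun l hl ↦ by rw [h.proj_smul_of_ne hl, map_zero, smul_zero],
    h.proj_smul_self]

theorem existsUnique_extension (h : IsDualCosetSystem ι π s t) (φ : N₀ →ₛₗ[j] M) :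
    ∃! Φ : N →ₗ[D] M, ∀ v, Φ (ι v) = φ v := by
  let Φ : N →ₗ[D] M :=
    { toFun n := ∑ i, t i • φ (π (s i • n))
      map_add' n n' := by simp only [smul_add, map_add, Finset.sum_add_distrib]
      map_smul' d n := by
        conv_lhs => rw [← h.sum_smul_proj n]
        simp only [Finset.smul_sum, map_sum, RingHom.id_apply]
        rw [Finset.sum_comm]
        refine Finset.sum_congr rfl fun i _ ↦ ?_
        simp only [← mul_smul d, h.sum_smul_map_proj_smul] }
  refine ⟨Φ, fun v ↦ ?_, fun Ψ hΨ ↦ LinearMap.ext fun n ↦ ?_⟩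
  · change ∑ i, t i • φ (π (s i • ι v)) = φ v
    simpa only [one_smul] using h.sum_smul_map_proj_smul φ 1 v
  · calc Ψ n = Ψ (∑ i, t i • ι (π (s i • n))) := by rw [h.sum_smul_proj]
      _ = ∑ i, t i • φ (π (s i • n)) := by simp only [map_sum, map_smul, hΨ]

end IsDualCosetSystem

end DualCosetSystem

lemma inv_mul_mem_centralizer_singleton_iff {G : Type*} [Group G] {g x y : G} :
    x⁻¹ * y ∈ Subgroup.centralizer {g} ↔ x * g * x⁻¹ = y * g * y⁻¹ := by
  rw [Subgroup.mem_centralizer_singleton_iff]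
  constructor <;> intro h
  · calc x * g * x⁻¹ = x * (g * (x⁻¹ * y)) * y⁻¹ := by group
      _ = x * ((x⁻¹ * y) * g) * y⁻¹ := by rw [h]
      _ = y * g * y⁻¹ := by group
  · calc x⁻¹ * y * g = x⁻¹ * (y * g * y⁻¹) * y := by group
      _ = x⁻¹ * (x * g * x⁻¹) * y := by rw [h]
      _ = g * (x⁻¹ * y) := by group

namespace CrossedProduct

variable {k : Type} [Field k] {S : Type} [Ring S] [Algebra k S] {G : Type} [Group G] [Fintype G]
  {act : G →* (S ≃ₐ[k] S)} {σ : G → G → S} {R : Type} [Ring R] [Algebra k R]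

local notation "Δ" => Delta _ _ _ _ _ _
local notation "𝒮" => SgSpan _ _ _ _ _ _
local notation "ℛ" => Rclass _ _ _ _ _ _

lemma tmul_op_smul (a b r : R) : (a ⊗ₜ[k] MulOpposite.op b) • r = a * r * b := by
  rw [TensorProduct.Algebra.smul_def, op_smul_eq_mul, smul_eq_mul, mul_assoc]

lemma algebraMap_smul_tensor (c : k) (r : R) : algebraMap k (R ⊗[k] Rᵐᵒᵖ) c • r = c • r := by
  rw [Algebra.TensorProduct.algebraMap_apply, ← MulOpposite.op_one, tmul_op_smul, mul_one,
    Algebra.smul_def]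

variable (cp : CrossedProduct k S G act σ R)

/-- The map `s ↦ s·ḡ`, with image `S·ḡ`. -/
noncomputable def mulU (g : G) : S →ₗ[k] R :=
  LinearMap.mulRight k (cp.u g : R) ∘ₗ cp.emb.toLinearMap

@[simp] lemma mulU_apply (g : G) (s : S) : cp.mulU g s = cp.emb s * cp.u g := rfl

lemma SgSpan_eq_range (g : G) : 𝒮 cp g = LinearMap.range (cp.mulU g) := by
  rw [← Submodule.span_eq (LinearMap.range (cp.mulU g)), SgSpan]
  congr 1
  ext r
  simp [eq_comm]

variable {cp} in
lemma mem_SgSpan {g : G} {r : R} : r ∈ 𝒮 cp g ↔ ∃ s, cp.emb s * cp.u g = r := by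
  rw [SgSpan_eq_range, LinearMap.mem_range]
  rfl

lemma emb_mul_u_mem (s : S) (g : G) : cp.emb s * cp.u g ∈ 𝒮 cp g := mem_SgSpan.2 ⟨s, rfl⟩

lemma u_mem (g : G) : (cp.u g : R) ∈ 𝒮 cp g := by
  simpa using cp.emb_mul_u_mem 1 g

variable {cp} in
lemma mul_mem_SgSpan {y z : G} {a b : R} (ha : a ∈ 𝒮 cp y) (hb : b ∈ 𝒮 cp z) :
    a * b ∈ 𝒮 cp (y * z) := by
  obtain ⟨s, rfl⟩ := mem_SgSpan.1 ha
  obtain ⟨t, rfl⟩ := mem_SgSpan.1 hb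
  refine mem_SgSpan.2 ⟨s * act y t * σ y z, Eq.symm ?_⟩
  calc cp.emb s * cp.u y * (cp.emb t * cp.u z)
      = cp.emb s * (cp.u y * cp.emb t) * cp.u z := by simp only [mul_assoc]
    _ = cp.emb s * cp.emb (act y t) * (cp.u y * cp.u z) := by
        rw [cp.u_conj]; simp only [mul_assoc]
    _ = cp.emb (s * act y t * σ y z) * cp.u (y * z) := by
        rw [cp.u_mul]; simp only [mul_assoc, map_mul]

lemma one_mem_SgSpan : (1 : R) ∈ 𝒮 cp (1 : G) := by
  simpa [cp.u_one] using cp.u_mem 1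

lemma u_inv_mem (y : G) : (((cp.u y)⁻¹ : Rˣ) : R) ∈ 𝒮 cp y⁻¹ := by
  obtain ⟨t, ht⟩ := cp.sigma_isUnit y⁻¹ y
  have u_inv_mul : cp.u y⁻¹ * cp.u y = cp.emb (t : S) := by
    rw [cp.u_mul, inv_mul_cancel, cp.u_one, Units.val_one, mul_one, ht]
  refine mem_SgSpan.2 ⟨(t⁻¹ : Sˣ), (Units.inv_eq_of_mul_eq_one_left ?_).symm⟩
  rw [mul_assoc, u_inv_mul, ← map_mul, Units.inv_mul, map_one]

variable {cp} in
lemma mem_SgSpan_inv {y : G} {r : R} :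
    r ∈ 𝒮 cp y⁻¹ ↔ ∃ s, cp.emb s * ((cp.u y)⁻¹ : Rˣ) = r := by
  constructor
  · intro hr
    have hru : r * cp.u y ∈ 𝒮 cp 1 := by simpa using mul_mem_SgSpan hr (cp.u_mem y)
    obtain ⟨s, hs⟩ := mem_SgSpan.1 hru
    rw [cp.u_one, Units.val_one, mul_one] at hs
    exact ⟨s, by rw [hs, Units.mul_inv_cancel_right]⟩
  · rintro ⟨s, rfl⟩
    have hs : cp.emb s ∈ 𝒮 cp 1 := by simpa [cp.u_one] using cp.emb_mul_u_mem s 1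
    simpa using mul_mem_SgSpan hs (cp.u_inv_mem y)

/-- The decomposition `R = ⊕ S·ḡ`, in coordinates. -/
noncomputable def coordEquiv : (G → S) ≃ₗ[k] R :=
  LinearEquiv.ofBijective (∑ g, cp.mulU g ∘ₗ LinearMap.proj g) <| by
    convert cp.basis
    simp

lemma coordEquiv_apply (f : G → S) : cp.coordEquiv f = ∑ g, cp.emb (f g) * cp.u g := by
  simp [coordEquiv]

/-- The projection of `R = ⊕ S·ḡ` onto the summand `S·ḡ`. -/
noncomputable def proj (g : G) : R →ₗ[k] R :=
  cp.mulU g ∘ₗ LinearMap.proj g ∘ₗ cp.coordEquiv.symm.toLinearMap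

lemma proj_mem (g : G) (r : R) : cp.proj g r ∈ 𝒮 cp g := cp.emb_mul_u_mem _ g

lemma sum_proj (r : R) : ∑ g, cp.proj g r = r :=
  (cp.coordEquiv_apply _).symm.trans (cp.coordEquiv.apply_symm_apply r)

lemma coordEquiv_symm_emb_mul_u [DecidableEq G] (g : G) (s : S) :
    cp.coordEquiv.symm (cp.emb s * cp.u g) = Pi.single g s := by
  rw [LinearEquiv.symm_apply_eq, coordEquiv_apply,
    Fintype.sum_eq_single g fun h hh ↦ by simp [hh]]
  simp

variable {cp} in
lemma proj_of_mem {g : G} {r : R} (hr : r ∈ 𝒮 cp g) : cp.proj g r = r := by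
  classical
  obtain ⟨s, rfl⟩ := mem_SgSpan.1 hr
  simp [proj, coordEquiv_symm_emb_mul_u]

variable {cp} in
lemma proj_of_mem_of_ne {g h : G} {r : R} (hr : r ∈ 𝒮 cp h) (hne : g ≠ h) :
    cp.proj g r = 0 := by
  classical
  obtain ⟨s, rfl⟩ := mem_SgSpan.1 hr
  simp [proj, coordEquiv_symm_emb_mul_u, hne]

/-- Pure tensors in `S·ȳ ⊗ S·ȳ⁻¹`, the elements of degree `y` that generate `Δ`. -/
def IsHomogeneous (y : G) (z : R ⊗[k] Rᵐᵒᵖ) : Prop :=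
  ∃ a ∈ 𝒮 cp y, ∃ b ∈ 𝒮 cp y⁻¹, a ⊗ₜ[k] MulOpposite.op b = z

section IsHomogeneous

variable {cp}

lemma IsHomogeneous.mul {y y' : G} {z z' : R ⊗[k] Rᵐᵒᵖ} (hz : cp.IsHomogeneous y z)
    (hz' : cp.IsHomogeneous y' z') : cp.IsHomogeneous (y * y') (z * z') := by
  obtain ⟨a, ha, b, hb, rfl⟩ := hz
  obtain ⟨a', ha', b', hb', rfl⟩ := hz'
  refine ⟨a * a', mul_mem_SgSpan ha ha', b' * b, ?_, ?_⟩
  · rw [mul_inv_rev]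
    exact mul_mem_SgSpan hb' hb
  · rw [Algebra.TensorProduct.tmul_mul_tmul, MulOpposite.op_mul]

lemma IsHomogeneous.smul {y : G} {z : R ⊗[k] Rᵐᵒᵖ} (c : k) (hz : cp.IsHomogeneous y z) :
    cp.IsHomogeneous y (c • z) := by
  obtain ⟨a, ha, b, hb, rfl⟩ := hz
  exact ⟨c • a, Submodule.smul_mem _ c ha, b, hb, (TensorProduct.smul_tmul' c a _).symm⟩

lemma IsHomogeneous.smul_mem_SgSpan {y h : G} {z : R ⊗[k] Rᵐᵒᵖ} (hz : cp.IsHomogeneous y z)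
    {r : R} (hr : r ∈ 𝒮 cp h) : z • r ∈ 𝒮 cp (y * h * y⁻¹) := by
  obtain ⟨a, ha, b, hb, rfl⟩ := hz
  rw [tmul_op_smul]
  exact mul_mem_SgSpan (mul_mem_SgSpan ha hr) hb

lemma IsHomogeneous.proj_smul {y : G} {z : R ⊗[k] Rᵐᵒᵖ} (hz : cp.IsHomogeneous y z) (h : G)
    (r : R) : cp.proj (y * h * y⁻¹) (z • r) = z • cp.proj h r := by
  conv_lhs => rw [← cp.sum_proj r, Finset.smul_sum, map_sum]
  rw [Fintype.sum_eq_single h]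
  · exact proj_of_mem (hz.smul_mem_SgSpan (cp.proj_mem h r))
  · intro l hl
    exact proj_of_mem_of_ne (hz.smul_mem_SgSpan (cp.proj_mem l r)) (by simpa using hl.symm)

end IsHomogeneous

/-- The homogeneous pure tensors with degree in `H`, which span `Δ(H)`. -/
def homogeneousTensors (H : Subgroup G) : Submonoid (R ⊗[k] Rᵐᵒᵖ) where
  carrier := {z | ∃ y ∈ H, cp.IsHomogeneous y z}
  mul_mem' := by
    rintro _ _ ⟨y, hy, hz⟩ ⟨y', hy', hz'⟩
    exact ⟨y * y', H.mul_mem hy hy', hz.mul hz'⟩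
  one_mem' := ⟨1, H.one_mem, 1, cp.one_mem_SgSpan, 1, by simpa using cp.one_mem_SgSpan, rfl⟩

lemma Delta_eq_adjoin (H : Subgroup G) : Δ cp H = Algebra.adjoin k (cp.homogeneousTensors H) := by
  rw [Delta]
  congr 1
  ext z
  constructor
  · rintro ⟨h, s, s', rfl⟩
    exact ⟨h, h.2, _, cp.emb_mul_u_mem s h, _, mem_SgSpan_inv.2 ⟨s', rfl⟩, rfl⟩
  · rintro ⟨h, hh, a, ha, b, hb, rfl⟩
    obtain ⟨s, rfl⟩ := mem_SgSpan.1 ha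
    obtain ⟨s', rfl⟩ := mem_SgSpan_inv.1 hb
    exact ⟨⟨h, hh⟩, s, s', rfl⟩

lemma Delta_toSubmodule (H : Subgroup G) :
    Subalgebra.toSubmodule (Δ cp H) = Submodule.span k (cp.homogeneousTensors H) := by
  rw [Delta_eq_adjoin, Algebra.adjoin_eq_span, Submonoid.closure_eq]

lemma Delta_mono {H K : Subgroup G} (hHK : H ≤ K) : Δ cp H ≤ Δ cp K := by
  simp only [Delta_eq_adjoin]
  exact Algebra.adjoin_mono fun z ⟨y, hy, hz⟩ ↦ ⟨y, hHK hy, hz⟩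

variable {cp}

lemma IsHomogeneous.mem_Delta {H : Subgroup G} {y : G} {z : R ⊗[k] Rᵐᵒᵖ}
    (hz : cp.IsHomogeneous y z) (hy : y ∈ H) : z ∈ Δ cp H := by
  rw [Delta_eq_adjoin]
  exact Algebra.subset_adjoin ⟨y, hy, hz⟩

@[elab_as_elim]
lemma Delta_induction {H : Subgroup G} {p : ∀ z : R ⊗[k] Rᵐᵒᵖ, z ∈ Δ cp H → Prop}
    (zero : p 0 (zero_mem _))
    (add : ∀ z z' hz hz', p z hz → p z' hz' → p (z + z') (add_mem hz hz'))
    (homogeneous : ∀ y (hy : y ∈ H) z (hz : cp.IsHomogeneous y z), p z (hz.mem_Delta hy))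
    {z : R ⊗[k] Rᵐᵒᵖ} (hz : z ∈ Δ cp H) : p z hz := by
  suffices ∃ h, p z h from this.elim fun _ h ↦ h
  rw [← Subalgebra.mem_toSubmodule, Delta_toSubmodule] at hz
  induction hz using Submodule.closure_induction with
  | zero => exact ⟨_, zero⟩
  | add z z' _ _ hz hz' =>
    obtain ⟨_, hz⟩ := hz
    obtain ⟨_, hz'⟩ := hz'
    exact ⟨_, add z z' _ _ hz hz'⟩
  | smul_mem c z hz =>
    obtain ⟨y, hy, hz⟩ := hz
    exact ⟨_, homogeneous y hy _ (hz.smul c)⟩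

lemma proj_smul_of_mem_Delta_centralizer {g : G} {z : R ⊗[k] Rᵐᵒᵖ}
    (hz : z ∈ Δ cp (Subgroup.centralizer {g})) (r : R) :
    cp.proj g (z • r) = z • cp.proj g r := by
  induction hz using Delta_induction with
  | zero => rw [zero_smul (R ⊗[k] Rᵐᵒᵖ) r, map_zero, zero_smul (R ⊗[k] Rᵐᵒᵖ) (cp.proj g r)]
  | add z z' _ _ hz hz' => rw [add_smul, map_add, hz, hz', add_smul]
  | homogeneous y hy z hz =>
    have conj_eq : y * g * y⁻¹ = g := by
      rw [Subgroup.mem_centralizer_singleton_iff.1 hy, mul_inv_cancel_right]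
    simpa only [conj_eq] using hz.proj_smul g r

lemma smul_mem_SgSpan {g : G} {z : R ⊗[k] Rᵐᵒᵖ}
    (hz : z ∈ Δ cp (Subgroup.centralizer {g})) {r : R} (hr : r ∈ 𝒮 cp g) : z • r ∈ 𝒮 cp g := by
  rw [← proj_of_mem hr, ← proj_smul_of_mem_Delta_centralizer hz]
  exact cp.proj_mem g _

lemma SgSpan_le_Rclass {g h : G} (hgh : IsConj g h) : 𝒮 cp h ≤ ℛ cp g := by
  refine Submodule.span_mono ?_
  rintro _ ⟨s, rfl⟩
  exact ⟨h, s, hgh, rfl⟩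

lemma mem_Rclass_iff {g : G} {r : R} : r ∈ ℛ cp g ↔ ∀ h, ¬ IsConj g h → cp.proj h r = 0 := by
  constructor
  · intro hr h hgh
    have hle : ℛ cp g ≤ LinearMap.ker (cp.proj h) := by
      refine Submodule.span_le.2 ?_
      rintro _ ⟨l, s, hgl, rfl⟩
      exact proj_of_mem_of_ne (cp.emb_mul_u_mem s l) fun hl ↦ hgh (hl ▸ hgl)
    exact hle hr
  · intro hr
    rw [← cp.sum_proj r]
    refine Submodule.sum_mem _ fun h _ ↦ ?_
    by_cases hgh : IsConj g h
    · exact SgSpan_le_Rclass hgh (cp.proj_mem h r)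
    · rw [hr h hgh]
      exact zero_mem _

lemma sum_conjugatesOf_proj {g : G} [Fintype (conjugatesOf g)] {r : R} (hr : r ∈ ℛ cp g) :
    ∑ h : conjugatesOf g, cp.proj h r = r := by
  conv_rhs => rw [← cp.sum_proj r]
  rw [← Finset.sum_subset (Finset.subset_univ (conjugatesOf g).toFinset) fun h _ hh ↦
    mem_Rclass_iff.1 hr h fun hgh ↦ hh (Set.mem_toFinset.2 hgh)]
  exact Finset.sum_set_coe (f := fun h ↦ cp.proj h r) (conjugatesOf g)

lemma smul_mem_Rclass {g : G} {z : R ⊗[k] Rᵐᵒᵖ} (hz : z ∈ Δ cp ⊤) {r : R} (hr : r ∈ ℛ cp g) :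
    z • r ∈ ℛ cp g := by
  induction hz using Delta_induction with
  | zero =>
    rw [zero_smul (R ⊗[k] Rᵐᵒᵖ) r]
    exact zero_mem _
  | add z z' _ _ hz hz' => rw [add_smul]; exact add_mem hz hz'
  | homogeneous y _ z hz =>
    refine mem_Rclass_iff.2 fun h hgh ↦ ?_
    have conj_eq : y * (y⁻¹ * h * y) * y⁻¹ = h := by group
    have hgh' : ¬ IsConj g (y⁻¹ * h * y) := fun hc ↦
      hgh (hc.trans (isConj_iff.2 ⟨y, conj_eq⟩))
    rw [← conj_eq, hz.proj_smul, mem_Rclass_iff.1 hr _ hgh', smul_zero]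

variable (cp)

/-- The `Δ`-module structure of `R_C`, as a submodule of `R`. -/
noncomputable instance moduleRclass (g : G) : Module ↥(Δ cp ⊤) ↥(ℛ cp g) where
  smul z a := ⟨(z : R ⊗[k] Rᵐᵒᵖ) • (a : R), smul_mem_Rclass z.2 a.2⟩
  one_smul a := Subtype.ext (one_smul (R ⊗[k] Rᵐᵒᵖ) (a : R))
  mul_smul z z' a := Subtype.ext (mul_smul (z : R ⊗[k] Rᵐᵒᵖ) z' (a : R))
  smul_zero z := Subtype.ext (smul_zero (z : R ⊗[k] Rᵐᵒᵖ))
  smul_add z a b := Subtype.ext (smul_add (z : R ⊗[k] Rᵐᵒᵖ) (a : R) b)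
  add_smul z z' a := Subtype.ext (add_smul (z : R ⊗[k] Rᵐᵒᵖ) z' (a : R))
  zero_smul a := Subtype.ext (zero_smul (R ⊗[k] Rᵐᵒᵖ) (a : R))

/-- The `Δ(C(g))`-module structure of `S·ḡ`, as a submodule of `R`. -/
noncomputable instance moduleSgSpan (g : G) :
    Module ↥(Δ cp (Subgroup.centralizer {g})) ↥(𝒮 cp g) where
  smul z v := ⟨(z : R ⊗[k] Rᵐᵒᵖ) • (v : R), smul_mem_SgSpan z.2 v.2⟩
  one_smul v := Subtype.ext (one_smul (R ⊗[k] Rᵐᵒᵖ) (v : R))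
  mul_smul z z' v := Subtype.ext (mul_smul (z : R ⊗[k] Rᵐᵒᵖ) z' (v : R))
  smul_zero z := Subtype.ext (smul_zero (z : R ⊗[k] Rᵐᵒᵖ))
  smul_add z v w := Subtype.ext (smul_add (z : R ⊗[k] Rᵐᵒᵖ) (v : R) w)
  add_smul z z' v := Subtype.ext (add_smul (z : R ⊗[k] Rᵐᵒᵖ) z' (v : R))
  zero_smul v := Subtype.ext (zero_smul (R ⊗[k] Rᵐᵒᵖ) (v : R))

variable {cp} in
lemma coe_smul_Rclass {g : G} (z : Δ cp ⊤) (a : ℛ cp g) :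
    ((z • a : ℛ cp g) : R) = (z : R ⊗[k] Rᵐᵒᵖ) • (a : R) := rfl

/-- The inclusion `Δ(C(g)) → Δ`. -/
noncomputable def centralizerIncl (g : G) : Δ cp (Subgroup.centralizer {g}) →+* Δ cp ⊤ :=
  (Subalgebra.inclusion (cp.Delta_mono le_top)).toRingHom

/-- The inclusion `S·ḡ → R_C`. -/
noncomputable def inclRclass (g : G) : 𝒮 cp g →ₛₗ[cp.centralizerIncl g] ℛ cp g where
  toFun := Submodule.inclusion (SgSpan_le_Rclass (IsConj.refl g))
  map_add' := map_add _
  map_smul' _ _ := rfl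

lemma coe_inclRclass (g : G) (v : 𝒮 cp g) : (cp.inclRclass g v : R) = v := rfl

/-- The projection `R_C → S·ḡ`. -/
noncomputable def projSgSpan (g : G) : ℛ cp g →+ 𝒮 cp g :=
  (((cp.proj g).codRestrict (𝒮 cp g) (cp.proj_mem g)).domRestrict (ℛ cp g)).toAddMonoidHom

lemma coe_projSgSpan (g : G) (a : ℛ cp g) : (cp.projSgSpan g a : R) = cp.proj g a := rfl

lemma isHomogeneous_u_tmul (x : G) :
    cp.IsHomogeneous x ((cp.u x : R) ⊗ₜ[k] MulOpposite.op (((cp.u x)⁻¹ : Rˣ) : R)) :=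
  ⟨_, cp.u_mem x, _, cp.u_inv_mem x, rfl⟩

lemma isHomogeneous_u_inv_tmul (x : G) :
    cp.IsHomogeneous x⁻¹ ((((cp.u x)⁻¹ : Rˣ) : R) ⊗ₜ[k] MulOpposite.op (cp.u x : R)) :=
  ⟨_, cp.u_inv_mem x, _, by simpa using cp.u_mem x, rfl⟩

/-- The unit `x̄ ⊗ x̄⁻¹` of `Δ`, which acts on `R` as conjugation by `x̄`. -/
noncomputable def conjUnit (x : G) : (↥(Δ cp ⊤))ˣ where
  val := ⟨_, (cp.isHomogeneous_u_tmul x).mem_Delta (Subgroup.mem_top x)⟩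
  inv := ⟨_, (cp.isHomogeneous_u_inv_tmul x).mem_Delta (Subgroup.mem_top x⁻¹)⟩
  val_inv := Subtype.ext <| by
    simp [Algebra.TensorProduct.tmul_mul_tmul, ← MulOpposite.op_mul,
      Algebra.TensorProduct.one_def]
  inv_val := Subtype.ext <| by
    simp [Algebra.TensorProduct.tmul_mul_tmul, ← MulOpposite.op_mul,
      Algebra.TensorProduct.one_def]

lemma isHomogeneous_conjUnit (x : G) :
    cp.IsHomogeneous x ((cp.conjUnit x : Δ cp ⊤) : R ⊗[k] Rᵐᵒᵖ) := cp.isHomogeneous_u_tmul x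

lemma isHomogeneous_conjUnit_inv (x : G) :
    cp.IsHomogeneous x⁻¹ (((cp.conjUnit x)⁻¹ : (Δ cp ⊤)ˣ) : Δ cp ⊤).1 :=
  cp.isHomogeneous_u_inv_tmul x

variable {cp}
variable {g : G} {x : conjugatesOf g → G}

lemma conjUnit_smul_proj {x h : G} (hx : x * g * x⁻¹ = h) (a : ℛ cp g) :
    ((cp.conjUnit x : Δ cp ⊤) • cp.inclRclass g
      (cp.projSgSpan g (((cp.conjUnit x)⁻¹ : (Δ cp ⊤)ˣ) • a)) : ℛ cp g) = cp.proj h a := by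
  rw [coe_smul_Rclass, coe_inclRclass, coe_projSgSpan,
    ← (cp.isHomogeneous_conjUnit x).proj_smul, hx, ← coe_smul_Rclass]
  congr 2
  exact smul_inv_smul (cp.conjUnit x) a

lemma projSgSpan_smul_smul_of_ne (hx : ∀ h, x h * g * (x h)⁻¹ = h)
    {h l : conjugatesOf g} (hhl : h ≠ l) (v : 𝒮 cp g) :
    cp.projSgSpan g
      ((((cp.conjUnit (x h))⁻¹ : (Δ cp ⊤)ˣ) : Δ cp ⊤) • (cp.conjUnit (x l) : Δ cp ⊤) •
        cp.inclRclass g v) = 0 := by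
  have hmem := (cp.isHomogeneous_conjUnit_inv (x h)).smul_mem_SgSpan
    ((cp.isHomogeneous_conjUnit (x l)).smul_mem_SgSpan v.2)
  refine Subtype.ext (proj_of_mem_of_ne hmem fun hg ↦ hhl (Subtype.ext ?_))
  rw [hx, inv_inv] at hg
  rw [← hx h]
  nth_rewrite 1 [hg]
  group

lemma closure_mul_conjUnit_inv (hx : ∀ h, x h * g * (x h)⁻¹ = h) :
    AddSubmonoid.closure {d : Δ cp ⊤ |
      ∃ a h, cp.centralizerIncl g a * ((cp.conjUnit (x h))⁻¹ : (Δ cp ⊤)ˣ) = d} = ⊤ := by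
  refine (AddSubmonoid.eq_top_iff' _).2 fun ⟨w, hw⟩ ↦ ?_
  induction hw using Delta_induction with
  | zero => exact zero_mem _
  | add z z' _ _ hz hz' => exact add_mem hz hz'
  | homogeneous y _ w hw =>
    let h : conjugatesOf g := ⟨y⁻¹ * g * y⁻¹⁻¹, isConj_iff.2 ⟨y⁻¹, rfl⟩⟩
    have hyx : y * x h ∈ Subgroup.centralizer {g} := by
      simpa using inv_mem (inv_mul_mem_centralizer_singleton_iff.2 (hx h))
    let a : Δ cp (Subgroup.centralizer {g}) :=
      ⟨_, (hw.mul (cp.isHomogeneous_conjUnit (x h))).mem_Delta hyx⟩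
    have ha : cp.centralizerIncl g a = ⟨w, hw.mem_Delta (Subgroup.mem_top y)⟩ * cp.conjUnit (x h) :=
      rfl
    exact AddSubmonoid.subset_closure ⟨a, h, by rw [ha, Units.mul_inv_cancel_right]⟩

lemma closure_conjUnit_mul (hx : ∀ h, x h * g * (x h)⁻¹ = h) :
    AddSubmonoid.closure {d : Δ cp ⊤ |
      ∃ a h, (cp.conjUnit (x h) : Δ cp ⊤) * cp.centralizerIncl g a = d} = ⊤ := by
  refine (AddSubmonoid.eq_top_iff' _).2 fun ⟨w, hw⟩ ↦ ?_
  induction hw using Delta_induction with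
  | zero => exact zero_mem _
  | add z z' _ _ hz hz' => exact add_mem hz hz'
  | homogeneous y _ w hw =>
    let h : conjugatesOf g := ⟨y * g * y⁻¹, isConj_iff.2 ⟨y, rfl⟩⟩
    let a : Δ cp (Subgroup.centralizer {g}) :=
      ⟨_, ((cp.isHomogeneous_conjUnit_inv (x h)).mul hw).mem_Delta
        (inv_mul_mem_centralizer_singleton_iff.2 (hx h))⟩
    have ha : cp.centralizerIncl g a = ((cp.conjUnit (x h))⁻¹ : (Δ cp ⊤)ˣ) *
        ⟨w, hw.mem_Delta (Subgroup.mem_top y)⟩ := rfl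
    exact AddSubmonoid.subset_closure ⟨a, h, by rw [ha, Units.mul_inv_cancel_left]⟩

theorem isDualCosetSystem_conjUnit [Fintype (conjugatesOf g)]
    (hx : ∀ h, x h * g * (x h)⁻¹ = h) :
    IsDualCosetSystem (cp.inclRclass g) (cp.projSgSpan g)
      (fun h ↦ (((cp.conjUnit (x h))⁻¹ : (Δ cp ⊤)ˣ) : Δ cp ⊤)) (fun h ↦ cp.conjUnit (x h)) where
  proj_smul a n := Subtype.ext (proj_smul_of_mem_Delta_centralizer a.2 n)
  proj_smul_self h v := by
    rw [← mul_smul, Units.inv_mul, one_smul]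
    exact Subtype.ext (proj_of_mem v.2)
  proj_smul_of_ne hhl v := projSgSpan_smul_smul_of_ne hx hhl v
  sum_smul_proj n := Subtype.ext <| by
    rw [Submodule.coe_sum]
    exact (Finset.sum_congr rfl fun h _ ↦ conjUnit_smul_proj (hx h) n).trans
      (sum_conjugatesOf_proj n.2)
  closure_left := closure_mul_conjUnit_inv hx
  closure_right := closure_conjUnit_mul hx

variable (cp g) in
theorem exists_isDualCosetSystem [Fintype (conjugatesOf g)] :
    ∃ s t : conjugatesOf g → Δ cp ⊤,
      IsDualCosetSystem (cp.inclRclass g) (cp.projSgSpan g) s t := by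
  choose x hx using fun h : conjugatesOf g ↦ isConj_iff.1 h.2
  exact ⟨_, _, isDualCosetSystem_conjUnit hx⟩

variable (cp g) in
/-- The map `R_C → Hom_{Δ(C(g))}(Δ, S·ḡ)` sending `a` to `w ↦ π(w a)`, for `π` the projection
onto `S·ḡ`. -/
noncomputable def toCoInd (a : ℛ cp g) : CoInd k S G act σ R cp g (cp.Delta_mono le_top) :=
  ⟨fun w ↦ cp.proj g ((w : R ⊗[k] Rᵐᵒᵖ) • (a : R)),
    fun w w' ↦ by
      beta_reduce
      rw [Subalgebra.coe_add, add_smul, map_add],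
    fun c w ↦ by
      beta_reduce
      rw [Subalgebra.coe_smul, Algebra.smul_def, mul_smul, algebraMap_smul_tensor, map_smul],
    fun w ↦ cp.proj_mem g _,
    fun z w ↦ (congrArg (cp.proj g) (mul_smul (z : R ⊗[k] Rᵐᵒᵖ) (w : R ⊗[k] Rᵐᵒᵖ) (a : R))).trans
      (proj_smul_of_mem_Delta_centralizer z.2 _)⟩

variable (cp g) in
theorem toCoInd_bijective : Function.Bijective (cp.toCoInd g) := by
  have := Fintype.ofFinite (conjugatesOf g)
  obtain ⟨s, t, hst⟩ := cp.exists_isDualCosetSystem g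
  refine (Function.bijective_iff_existsUnique _).2 fun ⟨f, hadd, _, hmem, hsmul⟩ ↦ ?_
  let f' : Δ cp ⊤ →+ 𝒮 cp g :=
    AddMonoidHom.mk' (fun w ↦ ⟨f w, hmem w⟩) fun w w' ↦ Subtype.ext (hadd w w')
  have hf' : ∀ a d, f' (cp.centralizerIncl g a * d) = a • f' d := fun a d ↦
    Subtype.ext (hsmul a d)
  refine (existsUnique_congr fun a ↦ ?_).1 (hst.existsUnique_forall_proj_smul_eq f' hf')
  exact ⟨fun h ↦ Subtype.ext (funext fun d ↦ congrArg Subtype.val (h d)),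
    fun h d ↦ Subtype.ext (congrFun (congrArg Subtype.val h) d)⟩

lemma toCoInd_conj {h : G} {r : S} {a : ℛ cp g}
    (ha : (a : R) = cp.u h * cp.emb r * cp.u g * ((cp.u h)⁻¹ : Rˣ)) {w : Δ cp ⊤}
    (hw : (w : R ⊗[k] Rᵐᵒᵖ) = (((cp.u h)⁻¹ : Rˣ) : R) ⊗ₜ[k] MulOpposite.op (cp.u h : R)) :
    (cp.toCoInd g a).1 w = cp.emb r * cp.u g := by
  have smul_eq : (w : R ⊗[k] Rᵐᵒᵖ) • (a : R) = cp.emb r * cp.u g := by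
    rw [hw, ha, tmul_op_smul]
    simp only [mul_assoc, Units.inv_mul, mul_one, Units.inv_mul_cancel_left]
  exact (congrArg (cp.proj g) smul_eq).trans (proj_of_mem (cp.emb_mul_u_mem r g))

theorem existsUnique_extension_Rclass {M : Type*} [AddCommMonoid M] [Module ↥(Δ cp ⊤) M]
    (φ : 𝒮 cp g →ₛₗ[cp.centralizerIncl g] M) :
    ∃! Φ : ℛ cp g →ₗ[Δ cp ⊤] M, ∀ v, Φ (cp.inclRclass g v) = φ v := by
  have := Fintype.ofFinite (conjugatesOf g)
  obtain ⟨s, t, hst⟩ := cp.exists_isDualCosetSystem g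
  exact hst.existsUnique_extension φ

end CrossedProduct

/-- **Step in the proof of Lemma 3.1**: for a crossed product `R = S #_σ G`, `g ∈ G`
with centralizer `C(g)` and conjugacy class `C`, the `Δ`-module `R_C = ⊕_{h ∈ C} S·h̄`
is isomorphic both to the induced module `Δ ⊗_{Δ(C(g))} S·ḡ` (expressed below by the
universal property of induction) and to the coinduced module `Hom_{Δ(C(g))}(Δ, S·ḡ)`
(where `Δ` acts on the latter by `((r₀⊗r₁)·f)(s₀⊗s₁) = f(s₀r₀ ⊗ r₁s₁)`, i.e.
`(z·f)(w) = f(wz)`); an explicit `Δ`-module isomorphism `R_C → Hom_{Δ(C(g))}(Δ, S·ḡ)`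
is given by `h̄ r ḡ (h̄)⁻¹ ↦ (((h̄)⁻¹ ⊗ h̄) ↦ r·ḡ)`, for `h` ranging over a set of coset
representatives for `C(g)` in `G`. -/
theorem Rclass_induced_coinduced
    (k : Type) [Field k] (S : Type) [Ring S] [Algebra k S]
    (G : Type) [Group G] [Fintype G]
    (act : G →* (S ≃ₐ[k] S)) (σ : G → G → S)
    (R : Type) [Ring R] [Algebra k R]
    (cp : CrossedProduct k S G act σ R) (g : G)
    (hle : Delta k S G act σ R cp (Subgroup.centralizer {g}) ≤ Delta k S G act σ R cp ⊤) :
    -- (1) `R_C` is isomorphic to the coinduced module, via the explicit map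
    (∃ Φ : ↥(Rclass k S G act σ R cp g) → CoInd k S G act σ R cp g hle,
      Function.Bijective Φ ∧
      -- additivity
      (∀ (a b : ↥(Rclass k S G act σ R cp g)) (w : ↥(Delta k S G act σ R cp ⊤)),
        (Φ (a + b)).1 w = (Φ a).1 w + (Φ b).1 w) ∧
      -- `Δ`-equivariance, for the action `(z·f)(w) = f(wz)` on the coinduced module
      (∀ (z : ↥(Delta k S G act σ R cp ⊤)) (a : ↥(Rclass k S G act σ R cp g))
        (ha : ((z : R ⊗[k] Rᵐᵒᵖ)) • (a : R) ∈ Rclass k S G act σ R cp g)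
        (w : ↥(Delta k S G act σ R cp ⊤)),
        (Φ ⟨((z : R ⊗[k] Rᵐᵒᵖ)) • (a : R), ha⟩).1 w = (Φ a).1 (w * z)) ∧
      -- the explicit formula `h̄ r ḡ (h̄)⁻¹ ↦ (((h̄)⁻¹ ⊗ h̄) ↦ r·ḡ)`
      (∀ (h : G) (r : S) (a : ↥(Rclass k S G act σ R cp g)),
        (a : R) = (cp.u h : R) * cp.emb r * (cp.u g : R) * (((cp.u h)⁻¹ : Rˣ) : R) →
        ∀ w : ↥(Delta k S G act σ R cp ⊤),
          (w : R ⊗[k] Rᵐᵒᵖ)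
              = ((((cp.u h)⁻¹ : Rˣ) : R)) ⊗ₜ[k] (MulOpposite.op ((cp.u h : R))) →
          (Φ a).1 w = cp.emb r * (cp.u g : R))) ∧
    -- (2) `S·ḡ ⊆ R_C`, and `R_C` together with this inclusion is the induced module
    -- `Δ ⊗_{Δ(C(g))} S·ḡ`, i.e. it satisfies the universal property of induction
    SgSpan k S G act σ R cp g ≤ Rclass k S G act σ R cp g ∧
    (∀ (M : Type) [AddCommGroup M] [Module ↥(Delta k S G act σ R cp ⊤) M]
      (φ : ↥(SgSpan k S G act σ R cp g) →+ M),
      (∀ (z : ↥(Delta k S G act σ R cp (Subgroup.centralizer {g})))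
        (v : ↥(SgSpan k S G act σ R cp g))
        (hv : ((z : R ⊗[k] Rᵐᵒᵖ)) • (v : R) ∈ SgSpan k S G act σ R cp g),
        φ ⟨((z : R ⊗[k] Rᵐᵒᵖ)) • (v : R), hv⟩ = Subalgebra.inclusion hle z • φ v) →
      ∃! Φ' : ↥(Rclass k S G act σ R cp g) →+ M,
        (∀ (z : ↥(Delta k S G act σ R cp ⊤)) (a : ↥(Rclass k S G act σ R cp g))
          (ha : ((z : R ⊗[k] Rᵐᵒᵖ)) • (a : R) ∈ Rclass k S G act σ R cp g),
          Φ' ⟨((z : R ⊗[k] Rᵐᵒᵖ)) • (a : R), ha⟩ = z • Φ' a) ∧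
        (∀ (v : ↥(SgSpan k S G act σ R cp g)) (hv : (v : R) ∈ Rclass k S G act σ R cp g),
          Φ' ⟨(v : R), hv⟩ = φ v)) := by
  refine ⟨⟨cp.toCoInd g, cp.toCoInd_bijective g, fun a b w ↦ ?_, fun z a _ w ↦ ?_,
    fun h r a ha w hw ↦ CrossedProduct.toCoInd_conj ha hw⟩,
    CrossedProduct.SgSpan_le_Rclass (IsConj.refl g), fun M _ _ φ hφ ↦ ?_⟩
  · exact (congrArg (cp.proj g) (smul_add (w : R ⊗[k] Rᵐᵒᵖ) (a : R) b)).trans (map_add _ _ _)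
  · exact congrArg (cp.proj g) (mul_smul (w : R ⊗[k] Rᵐᵒᵖ) (z : R ⊗[k] Rᵐᵒᵖ) (a : R)).symm
  · obtain ⟨Φ, hΦ, Φ_unique⟩ := CrossedProduct.existsUnique_extension_Rclass (cp := cp)
      { φ with map_smul' := fun z v ↦ hφ z v (z • v).2 }
    refine ⟨Φ.toAddMonoidHom, ⟨fun z a _ ↦ map_smul Φ z a, fun v _ ↦ hΦ v⟩, ?_⟩
    rintro Ψ ⟨Ψ_smul, Ψ_incl⟩
    have hΨ := Φ_unique { Ψ with map_smul' := fun z a ↦ Ψ_smul z a (z • a).2 } fun v ↦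
      Ψ_incl v (cp.inclRclass g v).2
    exact AddMonoidHom.ext (LinearMap.congr_fun hΨ)
end

section
/- Let H = (kG)*#_σ^τ L, g ∈ G, L_g the stabilizer of g in L, and H_g = (kG)*#_σ L_g. Let H_g ⊗_{(kG)*} k·p_g be the H_g-module induced from the simple (kG)*-module k·p_g, and let E := End_{H_g}(H_g ⊗_{(kG)*} k·p_g)^{op} be its endomorphism algebra with multiplication opposite to composition. Then E is isomorphic as a k-algebra to the twisted group algebra k_{σ_g}L_g, via the map sending x̄ to the endomorphism φ_x determined by φ_x(1 ⊗ p_g) = x̄ ⊗ p_g. -/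
/-- A presentation of the twisted group algebra `k_β W` of a group `W` over a field `k`
with respect to a `k^×`-valued two-cocycle `β`. -/
structure TwistedGroupAlgebra (k : Type) [Field k] (W : Type) [Group W]
    (β : W → W → kˣ) (T : Type) [Ring T] [Algebra k T] where
  bar : W → T
  basis : Function.Bijective fun f : W →₀ k => f.sum fun x a => a • bar x
  bar_mul : ∀ x y : W, bar x * bar y = ((β x y : k)) • bar (x * y)
  bar_one : bar 1 = 1

/-- A presentation of the crossed product algebra `H = (kG)* #_σ L` attached to an action
of a finite group `L` on a finite group `G` by automorphisms: `H` has `k`-basis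
`{p_g x̄ : g ∈ G, x ∈ L}` with multiplication `(p_g x̄)(p_h ȳ) = δ_{g,ˣh} σ_g(x,y) p_g (xy)‾`. -/
structure DualCrossedProduct (k : Type) [Field k] (L G : Type) [Group L] [Group G]
    [Fintype L] [Fintype G] [DecidableEq G] [MulDistribMulAction L G]
    (σc : G → L → L → kˣ) (H : Type) [Ring H] [Algebra k H] where
  /-- the basis element `p_g x̄` -/
  P : G → L → H
  /-- `{p_g x̄}` is a `k`-basis of `H` -/
  basis : Function.Bijective fun f : G × L → k => ∑ p : G × L, f p • P p.1 p.2
  /-- the multiplication rule `(p_g x̄)(p_h ȳ) = δ_{g,ˣh} σ_g(x,y) p_g (xy)‾` -/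
  mul_P : ∀ (g h : G) (x y : L),
    P g x * P h y = if g = x • h then ((σc g x y : k)) • P g (x * y) else 0
  /-- `Σ_g p_g 1̄ = 1` -/
  sum_P_one : ∑ g : G, P g 1 = 1

variable (k : Type) [Field k] (L G : Type) [Group L] [Group G]
  [Fintype L] [Fintype G] [DecidableEq G] [MulDistribMulAction L G]
  (σc : G → L → L → kˣ) (H : Type) [Ring H] [Algebra k H]

/-- The subalgebra `H_g = (kG)* #_σ L_g` of `H = (kG)* #_σ L`, spanned by the
elements `p_h x̄` with `h ∈ G` and `x ∈ L_g`. -/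
noncomputable def Hg (hp : DualCrossedProduct k L G σc H) (g : G) : Subalgebra k H :=
  Algebra.adjoin k {z | ∃ (h : G) (x : L), x ∈ MulAction.stabilizer L g ∧ z = hp.P h x}

/-!
Write `T = k_{σ_g} L_g` and `M = H_g ⊗ k·p_g`. The map `x̄ ↦ x̄ ⊗ p_g` extends to a `k`-linear
isomorphism `e : T → M`, through which a generator `p_h x̄` of `H_g` acts on `T` as left
multiplication by `δ_{h,g} x̄`. Hence `M` is cyclic over `H_g`, generated by `1 ⊗ p_g = e 1`, and
right multiplications of `T` are `H_g`-linear. An `H_g`-endomorphism is determined by its value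
`e t` at the generator, so it is right multiplication by `t`; composing right multiplications
reverses products, whence the opposite algebra.
-/

section Algebra

open MulOpposite

variable {R A S T M ι : Type*} [CommSemiring R] [Semiring A] [AddCommMonoid M] [Module R M]
  [Module A M] [Semiring T] [Algebra R T]

theorem smul_eq_mul_left_of_basis [SMulCommClass A R M] (b : Module.Basis ι R T) (e : T →ₗ[R] M)
    {a : A} {u : T} (h : ∀ i, a • e (b i) = e (u * b i)) (t : T) : a • e t = e (u * t) :=
  LinearMap.congr_fun
    (b.ext h : Module.toModuleEnd R M a ∘ₗ e = e ∘ₗ LinearMap.mulLeft R u) t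

variable [Algebra R A] [IsScalarTower R A M]

theorem smulCommClass_of_adjoin_eq_top [DistribSMul S M] [SMulCommClass S R M] {s : Set A}
    (hs : Algebra.adjoin R s = ⊤) (h : ∀ (t : S), ∀ a ∈ s, ∀ m : M, t • a • m = a • t • m) :
    SMulCommClass S A M where
  smul_comm t a m := by
    have ha : a ∈ Algebra.adjoin R s := hs ▸ Algebra.mem_top
    induction ha using Algebra.adjoin_induction generalizing m with
    | mem a ha => exact h t a ha m
    | algebraMap r => rw [algebraMap_smul, algebraMap_smul, smul_comm]
    | add a b _ _ iha ihb => rw [add_smul, add_smul, smul_add, iha, ihb]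
    | mul a b _ _ iha ihb => rw [mul_smul, mul_smul, iha, ihb]

theorem lsmul_bijective_of_span_singleton_eq_top [Semiring S] [Algebra R S] [Module S M]
    [SMulCommClass S A M] [IsScalarTower R S M] {m : M}
    (hm : Submodule.span A {m} = ⊤) (hS : Function.Bijective fun t : S => t • m) :
    Function.Bijective (Algebra.lsmul R A M : S →ₐ[R] Module.End A M) := by
  refine ⟨fun t u htu => hS.1 (LinearMap.congr_fun htu m), fun ψ => ?_⟩
  obtain ⟨t, ht⟩ := hS.2 (ψ m)
  exact ⟨t, LinearMap.ext_on hm (Set.eqOn_singleton.2 ht)⟩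

theorem exists_algEquiv_end_op_of_mul_left (e : T ≃ₗ[R] M) {s : Set A}
    (hs : Algebra.adjoin R s = ⊤) (hmul : ∀ a ∈ s, ∃ u : T, ∀ t, a • e t = e (u * t))
    (hspan : Submodule.span A {e 1} = ⊤) :
    ∃ Φ : T ≃ₐ[R] (Module.End A M)ᵐᵒᵖ, ∀ t u, (Φ t).unop (e u) = e (u * t) := by
  let : Module Tᵐᵒᵖ M := e.symm.toAddEquiv.module Tᵐᵒᵖ
  have : IsScalarTower R Tᵐᵒᵖ M := e.symm.isScalarTower (A := Tᵐᵒᵖ)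
  have op_smul (t u : T) : op t • e u = e (u * t) :=
    congrArg (fun v => e (v * t)) (e.symm_apply_apply u)
  have : SMulCommClass Tᵐᵒᵖ A M := smulCommClass_of_adjoin_eq_top hs fun t a ha m => by
    obtain ⟨u, hu⟩ := hmul a ha
    obtain ⟨v, rfl⟩ := e.surjective m
    rw [← op_unop t, hu, op_smul, op_smul, hu, mul_assoc]
  have op_smul_one (t : T) : op t • e 1 = e t := by rw [op_smul, one_mul]
  have eval_eq : (fun t : Tᵐᵒᵖ => t • e 1) = e ∘ unop := funext fun t => op_smul_one t.unop
  have eval_bijective : Function.Bijective fun t : Tᵐᵒᵖ => t • e 1 :=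
    eval_eq ▸ e.bijective.comp unop_bijective
  exact ⟨AlgEquiv.opComm.symm
    (AlgEquiv.ofBijective _ (lsmul_bijective_of_span_singleton_eq_top hspan eval_bijective)),
    op_smul⟩

end Algebra

section Basis

variable {ι R M : Type*} [Semiring R] [AddCommMonoid M] [Module R M] (v : ι → M)
  (hv : Function.Bijective fun f : ι →₀ R => f.sum fun i a => a • v i)

/-- The basis given by a family `v` for which `f ↦ ∑ i, f i • v i` is bijective on finitely
supported coefficient families, the form in which bases are presented in `TwistedGroupAlgebra`. -/
noncomputable def basisOfBijective : Module.Basis ι R M :=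
  Module.Basis.mk (v := v) hv.1
    (Finsupp.range_linearCombination R (v := v) ▸ (LinearMap.range_eq_top.2 hv.2).ge)

theorem coe_basisOfBijective : ⇑(basisOfBijective v hv) = v :=
  Module.Basis.coe_mk _ _

end Basis

theorem TwistedGroupAlgebra.exists_linearEquiv_bar {k W T : Type} {M : Type*} [Field k] [Group W]
    {β : W → W → kˣ} [AddCommMonoid M] [Module k M] [Ring T] [Algebra k T]
    (A : TwistedGroupAlgebra k W β T) (b : Module.Basis W k M) :
    ∃ e : T ≃ₗ[k] M, ∀ x, e (A.bar x) = b x := by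
  refine ⟨(basisOfBijective A.bar A.basis).equiv b (Equiv.refl W), fun x => ?_⟩
  simpa only [coe_basisOfBijective, Equiv.refl_apply] using
    (basisOfBijective A.bar A.basis).equiv_apply x b (Equiv.refl W)

section CrossedProduct

variable {k L G σc H}

/-- The generator `p_h x̄` of `H_g`, for `x` in the stabilizer of `g`. -/
def Hg.gen (hp : DualCrossedProduct k L G σc H) (g h : G) (x : MulAction.stabilizer L g) :
    Hg k L G σc H hp g :=
  ⟨hp.P h x, Algebra.subset_adjoin ⟨h, x, x.2, rfl⟩⟩

theorem Hg.adjoin_range_gen (hp : DualCrossedProduct k L G σc H) (g : G) :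
    Algebra.adjoin k
      (Set.range fun p : G × MulAction.stabilizer L g => Hg.gen hp g p.1 p.2) = ⊤ := by
  refine eq_top_iff.2 (Algebra.adjoin_adjoin_coe_preimage.ge.trans (Algebra.adjoin_mono ?_))
  rintro ⟨_, _⟩ ⟨h, x, hx, rfl⟩
  exact ⟨(h, ⟨x, hx⟩), rfl⟩

variable {hp : DualCrossedProduct k L G σc H} {g : G} {T : Type} [Ring T] [Algebra k T]
  {M : Type*} [AddCommMonoid M] [Module k M] [Module (Hg k L G σc H hp g) M]
  [IsScalarTower k (Hg k L G σc H hp g) M]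
  (A : TwistedGroupAlgebra k (MulAction.stabilizer L g) (fun x y => σc g x y) T) (e : T →ₗ[k] M)
  (hact : ∀ (h : G) (x y : MulAction.stabilizer L g), Hg.gen hp g h x • e (A.bar y) =
    if h = g then (σc g x y : k) • e (A.bar (x * y)) else 0)

include hact

theorem Hg.gen_smul_eq_mul_left (h : G) (x : MulAction.stabilizer L g) (t : T) :
    Hg.gen hp g h x • e t = e ((if h = g then A.bar x else 0) * t) := by
  refine smul_eq_mul_left_of_basis (basisOfBijective A.bar A.basis) e (fun y => ?_) t
  rw [coe_basisOfBijective, hact]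
  split_ifs
  · rw [A.bar_mul, map_smul]
  · rw [zero_mul, map_zero]

theorem Hg.span_map_one_eq_top (he : Function.Surjective e) :
    Submodule.span (Hg k L G σc H hp g) {e 1} = ⊤ := by
  have gen_smul_one (x : MulAction.stabilizer L g) : Hg.gen hp g g x • e 1 = e (A.bar x) := by
    rw [Hg.gen_smul_eq_mul_left A e hact, if_pos rfl, mul_one]
  rw [← Submodule.restrictScalars_eq_top_iff k, eq_top_iff, ← LinearMap.range_eq_top.2 he,
    ← Submodule.map_top, ← (basisOfBijective A.bar A.basis).span_eq, Submodule.map_span,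
    Submodule.span_le, coe_basisOfBijective]
  rintro _ ⟨_, ⟨x, rfl⟩, rfl⟩
  exact Submodule.mem_span_singleton.2 ⟨_, gen_smul_one x⟩

end CrossedProduct

/-- **Lemma 4.2**: for `H = (kG)* #_σ^τ L` and `g ∈ G`, let
`M = H_g ⊗_{(kG)*} k·p_g` be the `H_g`-module induced from the simple `(kG)*`-module
`k·p_g` (it has `k`-basis `{x̄ ⊗ p_g : x ∈ L_g}`, with
`(p_h x̄)·(ȳ ⊗ p_g) = δ_{h,g} σ_g(x,y) (xy)‾ ⊗ p_g`), and let
`E = End_{H_g}(M)^{op}` be its endomorphism algebra with multiplication opposite to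
composition.  Then `E ≅ k_{σ_g} L_g` as `k`-algebras, the isomorphism sending `x̄` to the
endomorphism `φ_x` determined by `φ_x(1 ⊗ p_g) = x̄ ⊗ p_g`. -/
theorem endomorphism_algebra_of_induced_module
    (hp : DualCrossedProduct k L G σc H) (g : G)
    (M : Type) [AddCommGroup M] [Module k M]
    [Module (Hg k L G σc H hp g) M] [IsScalarTower k (Hg k L G σc H hp g) M]
    [SMulCommClass (Hg k L G σc H hp g) k M]
    -- `M` has `k`-basis `{ȳ ⊗ p_g : y ∈ L_g}` …
    (q : ↥(MulAction.stabilizer L g) → M)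
    (hq : Function.Bijective fun f : ↥(MulAction.stabilizer L g) →₀ k =>
      f.sum fun x a => a • q x)
    -- … on which `H_g` acts by `(p_h x̄)·(ȳ ⊗ p_g) = δ_{h,g} σ_g(x,y) (xy)‾ ⊗ p_g`
    (hact : ∀ (h : G) (x y : ↥(MulAction.stabilizer L g)),
      (⟨hp.P h x, Algebra.subset_adjoin ⟨h, x, x.2, rfl⟩⟩ : Hg k L G σc H hp g) • q y
        = if h = g then ((σc g x y : k)) • q (x * y) else 0)
    -- a twisted group algebra `k_{σ_g} L_g`
    (T : Type) [Ring T] [Algebra k T]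
    (A₁ : TwistedGroupAlgebra k (↥(MulAction.stabilizer L g)) (fun x y => σc g x y) T) :
    -- then `E = End_{H_g}(M)^{op} ≅ k_{σ_g} L_g`, via `x̄ ↦ φ_x` with `φ_x(1⊗p_g) = x̄⊗p_g`
    ∃ Φ : T ≃ₐ[k] (Module.End (Hg k L G σc H hp g) M)ᵐᵒᵖ,
      ∀ x : ↥(MulAction.stabilizer L g), ((Φ (A₁.bar x)).unop) (q 1) = q x := by
  obtain ⟨e, he⟩ := A₁.exists_linearEquiv_bar (basisOfBijective q hq)
  rw [coe_basisOfBijective] at he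
  obtain rfl : (fun x => e (A₁.bar x)) = q := funext he
  have left_mul : ∀ a ∈ Set.range fun p : G × MulAction.stabilizer L g => Hg.gen hp g p.1 p.2,
      ∃ u : T, ∀ t, a • e t = e (u * t) := by
    rintro _ ⟨⟨h, x⟩, rfl⟩
    exact ⟨_, Hg.gen_smul_eq_mul_left A₁ e.toLinearMap hact h x⟩
  have cyclic : Submodule.span (Hg k L G σc H hp g) {e 1} = ⊤ :=
    Hg.span_map_one_eq_top A₁ e.toLinearMap hact e.surjective
  obtain ⟨Φ, hΦ⟩ :=
    exists_algEquiv_end_op_of_mul_left e (Hg.adjoin_range_gen hp g) left_mul cyclic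
  exact ⟨Φ, fun x => by
    simpa only [A₁.bar_one, one_mul] using hΦ (A₁.bar x) (A₁.bar 1)⟩
end

section
/- Let H = (kG)*#_σ^τ L with coproduct Δ(p_g x̄) = Σ_{hk=g} τ_{h,k}(x) p_h x̄ ⊗ p_k x̄. Since Δ is an algebra map, for all g,h ∈ G and all x,y ∈ L_g ∩ L_h one has σ_g(x,y)·σ_h(x,y) = σ_{gh}(x,y)·τ_{g,h}(x)^{-1}·τ_{g,h}(y)^{-1}·τ_{g,h}(xy); that is, the cocycles σ_g·σ_h and σ_{gh} restricted to L_g ∩ L_h are cohomologous via τ_{g,h}. Consequently, the map ψ(x̄) = τ_{g,h}(x) x̄ is an algebra isomorphism from the twisted group algebra k_{σ_{gh}}(L_g ∩ L_h) to k_{σ_g·σ_h}(L_g ∩ L_h). -/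
open scoped TensorProduct

/-- A presentation of the (quasi) Hopf algebra `H = (kG)* #_σ^τ L` attached to an action
of a finite group `L` on a finite group `G` by automorphisms:  as an algebra, `H` is the
crossed product `(kG)* #_σ L`, with `k`-basis `{p_g x̄ : g ∈ G, x ∈ L}` and multiplication
`(p_g x̄)(p_h ȳ) = δ_{g,ˣh} σ_g(x,y) p_g (xy)‾`, and the coproduct is the algebra map
`Δ(p_g x̄) = Σ_{hk=g} τ_{h,k}(x) p_h x̄ ⊗ p_k x̄`. -/
structure HopfCrossedProduct (k : Type) [Field k] (L G : Type) [Group L] [Group G]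
    [Fintype L] [Fintype G] [DecidableEq G] [MulDistribMulAction L G]
    (σc : G → L → L → kˣ) (τc : G → G → L → kˣ)
    (H : Type) [Ring H] [Algebra k H] where
  /-- the basis element `p_g x̄` -/
  P : G → L → H
  /-- `{p_g x̄}` is a `k`-basis of `H` -/
  basis : Function.Bijective fun f : G × L → k => ∑ p : G × L, f p • P p.1 p.2
  /-- the multiplication rule `(p_g x̄)(p_h ȳ) = δ_{g,ˣh} σ_g(x,y) p_g (xy)‾` -/
  mul_P : ∀ (g h : G) (x y : L),
    P g x * P h y = if g = x • h then ((σc g x y : k)) • P g (x * y) else 0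
  /-- `Σ_g p_g 1̄ = 1` -/
  sum_P_one : ∑ g : G, P g 1 = 1
  /-- the coproduct, an algebra map (`H` being a quasi Hopf algebra) -/
  comul : H →ₐ[k] H ⊗[k] H
  /-- `Δ(p_g x̄) = Σ_{hk=g} τ_{h,k}(x) p_h x̄ ⊗ p_k x̄` -/
  comul_P : ∀ (g : G) (x : L),
    comul (P g x) = ∑ p : G × G, if p.1 * p.2 = g
      then ((τc p.1 p.2 x : k)) • (P p.1 x ⊗ₜ[k] P p.2 x) else 0

/-! The coproduct is multiplicative, so
`Δ(p_{gh} x̄) Δ(p_{x⁻¹(gh)} ȳ) = σ_{gh}(x,y) Δ(p_{gh} (xy)‾)`. In the product of sums on the left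
the multiplication rule pairs the term indexed by `(a, b)` only with the one indexed by
`(x⁻¹a, x⁻¹b)`, so both sides are combinations of the linearly independent elements
`p_a (xy)‾ ⊗ p_b (xy)‾`. Comparing the coefficients at `(g, h)` gives
`σ_{gh}(x,y) τ_{g,h}(xy) = τ_{g,h}(x) τ_{x⁻¹g,x⁻¹h}(y) σ_g(x,y) σ_h(x,y)` for all `x, y ∈ L`. If
`x` fixes `g` and `h` this is the cohomology relation, and rescaling the basis `x̄` by a cochain
that relates two cocycles turns one twisted multiplication into the other. -/

namespace TwistedGroupAlgebra

variable {k W T T₁ T₂ : Type} [Field k] [Group W] [Ring T] [Algebra k T]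
  [Ring T₁] [Algebra k T₁] [Ring T₂] [Algebra k T₂] {β β₁ β₂ : W → W → kˣ}

theorem linearIndependent_bar (A : TwistedGroupAlgebra k W β T) : LinearIndependent k A.bar :=
  A.basis.injective

theorem span_range_bar (A : TwistedGroupAlgebra k W β T) :
    Submodule.span k (Set.range A.bar) = ⊤ := by
  rw [← Finsupp.range_linearCombination]
  exact LinearMap.range_eq_top.2 A.basis.surjective

/-- The elements `x̄` of a twisted group algebra, bundled as a `Module.Basis`. -/
noncomputable def toBasis (A : TwistedGroupAlgebra k W β T) : Module.Basis W k T :=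
  .mk A.linearIndependent_bar A.span_range_bar.ge

@[simp]
theorem toBasis_apply (A : TwistedGroupAlgebra k W β T) (x : W) : A.toBasis x = A.bar x := by
  rw [toBasis, Module.Basis.mk_apply]

/-- The linear isomorphism `x̄ ↦ t(x) x̄` between two twisted group algebras of `W`, for any
cochain `t : W → kˣ`. -/
noncomputable def rescale (A₁ : TwistedGroupAlgebra k W β₁ T₁)
    (A₂ : TwistedGroupAlgebra k W β₂ T₂) (t : W → kˣ) : T₁ ≃ₗ[k] T₂ :=
  A₁.toBasis.equiv (A₂.toBasis.unitsSMul t) (Equiv.refl W)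

@[simp]
theorem rescale_bar (A₁ : TwistedGroupAlgebra k W β₁ T₁) (A₂ : TwistedGroupAlgebra k W β₂ T₂)
    (t : W → kˣ) (x : W) : A₁.rescale A₂ t (A₁.bar x) = (t x : k) • A₂.bar x := by
  rw [← A₁.toBasis_apply, rescale, Module.Basis.equiv_apply, Equiv.refl_apply,
    Module.Basis.unitsSMul_apply, toBasis_apply, Units.smul_def]

theorem rescale_mul (A₁ : TwistedGroupAlgebra k W β₁ T₁) (A₂ : TwistedGroupAlgebra k W β₂ T₂)
    {t : W → kˣ} (ht : ∀ x y, β₁ x y * t (x * y) = t x * t y * β₂ x y) (a b : T₁) :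
    A₁.rescale A₂ t (a * b) = A₁.rescale A₂ t a * A₁.rescale A₂ t b := by
  have map_bar_mul (x y : W) : A₁.rescale A₂ t (A₁.bar x * A₁.bar y) =
      A₁.rescale A₂ t (A₁.bar x) * A₁.rescale A₂ t (A₁.bar y) := by
    simp only [bar_mul, map_smul, rescale_bar, smul_mul_smul_comm, smul_smul,
      ← Units.val_mul, ht]
  refine (LinearMap.map_mul_iff (A₁.rescale A₂ t).toLinearMap).2 ?_ a b
  exact A₁.toBasis.ext fun x => A₁.toBasis.ext fun y => by simpa using map_bar_mul x y

/-- The algebra isomorphism `x̄ ↦ t(x) x̄` between the twisted group algebras of two cocycles that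
are cohomologous via `t`. -/
noncomputable def rescaleAlgEquiv (A₁ : TwistedGroupAlgebra k W β₁ T₁)
    (A₂ : TwistedGroupAlgebra k W β₂ T₂) {t : W → kˣ}
    (ht : ∀ x y, β₁ x y * t (x * y) = t x * t y * β₂ x y) : T₁ ≃ₐ[k] T₂ :=
  .ofLinearEquiv (A₁.rescale A₂ t)
    (MulEquiv.map_one ⟨(A₁.rescale A₂ t).toEquiv, A₁.rescale_mul A₂ ht⟩) (A₁.rescale_mul A₂ ht)

theorem rescaleAlgEquiv_bar (A₁ : TwistedGroupAlgebra k W β₁ T₁)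
    (A₂ : TwistedGroupAlgebra k W β₂ T₂) {t : W → kˣ}
    (ht : ∀ x y, β₁ x y * t (x * y) = t x * t y * β₂ x y) (x : W) :
    A₁.rescaleAlgEquiv A₂ ht (A₁.bar x) = (t x : k) • A₂.bar x :=
  A₁.rescale_bar A₂ t x

end TwistedGroupAlgebra

namespace HopfCrossedProduct

variable {k L G H : Type} [Field k] [Group L] [Group G] [Fintype L] [Fintype G] [DecidableEq G]
  [MulDistribMulAction L G] {σc : G → L → L → kˣ} {τc : G → G → L → kˣ} [Ring H] [Algebra k H]

theorem linearIndependent_P (hp : HopfCrossedProduct k L G σc τc H) :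
    LinearIndependent k fun p : G × L => hp.P p.1 p.2 :=
  linearIndependent_iff_injective_fintypeLinearCombination.2 hp.basis.injective

theorem span_range_P (hp : HopfCrossedProduct k L G σc τc H) :
    Submodule.span k (Set.range fun p : G × L => hp.P p.1 p.2) = ⊤ := by
  rw [← Fintype.range_linearCombination]
  exact LinearMap.range_eq_top.2 hp.basis.surjective

/-- The elements `p_g x̄` of `H`, bundled as a `Module.Basis`. -/
noncomputable def toBasis (hp : HopfCrossedProduct k L G σc τc H) : Module.Basis (G × L) k H :=
  .mk hp.linearIndependent_P hp.span_range_P.ge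

@[simp]
theorem toBasis_apply (hp : HopfCrossedProduct k L G σc τc H) (p : G × L) :
    hp.toBasis p = hp.P p.1 p.2 := by
  rw [toBasis, Module.Basis.mk_apply]

theorem linearIndependent_P_tmul_P (hp : HopfCrossedProduct k L G σc τc H) (z : L) :
    LinearIndependent k fun p : G × G => hp.P p.1 z ⊗ₜ[k] hp.P p.2 z := by
  have injective_index : Function.Injective fun p : G × G => ((p.1, z), (p.2, z)) := by
    rintro ⟨a, b⟩ ⟨c, d⟩ h
    simpa using h
  simpa [Function.comp_def] using
    (hp.toBasis.tensorProduct hp.toBasis).linearIndependent.comp _ injective_index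

theorem P_tmul_P_mul_P_tmul_P (hp : HopfCrossedProduct k L G σc τc H) (p q : G × G) (x y : L) :
    (hp.P p.1 x ⊗ₜ[k] hp.P p.2 x) * (hp.P q.1 y ⊗ₜ[k] hp.P q.2 y) =
      if q = x⁻¹ • p then ((σc p.1 x y * σc p.2 x y : kˣ) : k) •
        (hp.P p.1 (x * y) ⊗ₜ[k] hp.P p.2 (x * y)) else 0 := by
  rw [Algebra.TensorProduct.tmul_mul_tmul, hp.mul_P, hp.mul_P]
  simp only [eq_inv_smul_iff, Prod.ext_iff, Prod.smul_fst, Prod.smul_snd, eq_comm (b := p.1),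
    eq_comm (b := p.2)]
  split_ifs <;> simp_all [TensorProduct.smul_tmul', smul_smul, mul_comm]

theorem comul_P_mul_comul_P (hp : HopfCrossedProduct k L G σc τc H) (g : G) (x y : L) :
    hp.comul (hp.P g x) * hp.comul (hp.P (x⁻¹ • g) y) =
      ∑ p : G × G, if p.1 * p.2 = g then
        ((τc p.1 p.2 x * τc (x⁻¹ • p.1) (x⁻¹ • p.2) y * (σc p.1 x y * σc p.2 x y) : kˣ) : k) •
          (hp.P p.1 (x * y) ⊗ₜ[k] hp.P p.2 (x * y)) else 0 := by
  rw [hp.comul_P, hp.comul_P, Finset.sum_mul_sum]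
  refine Finset.sum_congr rfl fun p _ => ?_
  rw [Finset.sum_eq_single (x⁻¹ • p)]
  · have smul_mul_iff : x⁻¹ • p.1 * x⁻¹ • p.2 = x⁻¹ • g ↔ p.1 * p.2 = g := by
      rw [← smul_mul', smul_left_cancel_iff]
    simp only [Prod.smul_fst, Prod.smul_snd, smul_mul_iff]
    split_ifs
    · have tmul_mul := hp.P_tmul_P_mul_P_tmul_P p (x⁻¹ • p) x y
      rw [if_pos rfl] at tmul_mul
      rw [smul_mul_smul_comm, ← Prod.smul_fst, ← Prod.smul_snd, tmul_mul, smul_smul]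
      push_cast
      rfl
    · exact zero_mul 0
  · intro q _ hq
    have tmul_mul := hp.P_tmul_P_mul_P_tmul_P p q x y
    rw [if_neg hq] at tmul_mul
    split_ifs <;> simp [tmul_mul]
  · simp

theorem sigma_mul_tau (hp : HopfCrossedProduct k L G σc τc H) (g h : G) (x y : L) :
    σc (g * h) x y * τc g h (x * y) =
      τc g h x * τc (x⁻¹ • g) (x⁻¹ • h) y * (σc g x y * σc h x y) := by
  have comul_mul : hp.comul (hp.P (g * h) x) * hp.comul (hp.P (x⁻¹ • (g * h)) y) =
      (σc (g * h) x y : k) • hp.comul (hp.P (g * h) (x * y)) := by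
    rw [← map_mul, hp.mul_P, if_pos (smul_inv_smul x _).symm, map_smul]
  rw [comul_P_mul_comul_P, comul_P, Finset.smul_sum] at comul_mul
  simp only [smul_smul, ← ite_zero_smul] at comul_mul
  have coeff_eq := Fintype.linearIndependent_iffₛ.1 (hp.linearIndependent_P_tmul_P (x * y)) _ _
    comul_mul (g, h)
  simpa [Units.ext_iff] using coeff_eq.symm

end HopfCrossedProduct

theorem sigma_tau_compatibility_general
    (k : Type) [Field k] (L G : Type) [Group L] [Group G]
    [Fintype L] [Fintype G] [DecidableEq G] [MulDistribMulAction L G]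
    (σc : G → L → L → kˣ) (τc : G → G → L → kˣ)
    (H : Type) [Ring H] [Algebra k H]
    (hp : HopfCrossedProduct k L G σc τc H)
    (g h : G) :
    (∀ x y : L, σc g x y * σc h x y =
      σc (g * h) x y * (τc g h x)⁻¹ * (τc (x⁻¹ • g) (x⁻¹ • h) y)⁻¹ * τc g h (x * y)) ∧
    (∀ W ≤ MulAction.stabilizer L g ⊓ MulAction.stabilizer L h,
      ∀ (T₁ T₂ : Type) (_ : Ring T₁) (_ : Algebra k T₁) (_ : Ring T₂) (_ : Algebra k T₂)
        (A₁ : TwistedGroupAlgebra k W (fun x y => σc (g * h) x y) T₁)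
        (A₂ : TwistedGroupAlgebra k W (fun x y => σc g x y * σc h x y) T₂),
      ∃ Ψ : T₁ ≃ₐ[k] T₂, ∀ x : W, Ψ (A₁.bar x) = (τc g h x : k) • A₂.bar x) := by
  refine ⟨fun x y => ?_, fun W hW T₁ T₂ _ _ _ _ A₁ A₂ => ?_⟩
  · rw [mul_right_comm, mul_right_comm _ _ (τc g h (x * y)), mul_assoc, ← mul_inv, hp.sigma_mul_tau,
      mul_inv_cancel_comm]
  · have cohomologous (x y : W) : σc (g * h) x y * τc g h ↑(x * y) =
        τc g h x * τc g h y * (σc g x y * σc h x y) := by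
      have hg : (x : L)⁻¹ • g = g := inv_smul_eq_iff.2 (hW x.2).1.symm
      have hh : (x : L)⁻¹ • h = h := inv_smul_eq_iff.2 (hW x.2).2.symm
      simpa [hg, hh] using hp.sigma_mul_tau g h x y
    exact ⟨A₁.rescaleAlgEquiv A₂ cohomologous, A₁.rescaleAlgEquiv_bar A₂ cohomologous⟩

/-- Since the coproduct of `H = (kG)* #_σ^τ L` is an algebra map, for all `g,h ∈ G` and
`x,y ∈ L_g ∩ L_h` one has
`σ_g(x,y)·σ_h(x,y) = σ_{gh}(x,y)·τ_{g,h}(x)⁻¹·τ_{g,h}(y)⁻¹·τ_{g,h}(xy)`; that is,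
`σ_g·σ_h` and `σ_{gh}` are cohomologous on `L_g ∩ L_h` via `τ_{g,h}`.  Consequently
`ψ(x̄) = τ_{g,h}(x) x̄` is an algebra isomorphism
`k_{σ_{gh}}(L_g ∩ L_h) → k_{σ_g·σ_h}(L_g ∩ L_h)`. -/
theorem sigma_tau_compatibility
    (k : Type) [Field k] (L G : Type) [Group L] [Group G]
    [Fintype L] [Fintype G] [DecidableEq G] [MulDistribMulAction L G]
    (σc : G → L → L → kˣ) (τc : G → G → L → kˣ)
    (H : Type) [Ring H] [Algebra k H]
    (hp : HopfCrossedProduct k L G σc τc H)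
    (g h : G) :
    -- the cohomology relation (4.8)
    (∀ x y : L, x ∈ MulAction.stabilizer L g ⊓ MulAction.stabilizer L h →
      y ∈ MulAction.stabilizer L g ⊓ MulAction.stabilizer L h →
      σc g x y * σc h x y
        = σc (g * h) x y * (τc g h x)⁻¹ * (τc g h y)⁻¹ * τc g h (x * y)) ∧
    -- the induced algebra isomorphism `ψ : k_{σ_{gh}}(L_g ∩ L_h) ≅ k_{σ_g σ_h}(L_g ∩ L_h)`
    (∀ (T₁ T₂ : Type) (_ : Ring T₁) (_ : Algebra k T₁) (_ : Ring T₂) (_ : Algebra k T₂)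
      (A₁ : TwistedGroupAlgebra k (↥(MulAction.stabilizer L g ⊓ MulAction.stabilizer L h))
        (fun x y => σc (g * h) x y) T₁)
      (A₂ : TwistedGroupAlgebra k (↥(MulAction.stabilizer L g ⊓ MulAction.stabilizer L h))
        (fun x y => σc g x y * σc h x y) T₂),
      ∃ Ψ : T₁ ≃ₐ[k] T₂,
        ∀ x : ↥(MulAction.stabilizer L g ⊓ MulAction.stabilizer L h),
          Ψ (A₁.bar x) = ((τc g h x : k)) • A₂.bar x) := by
  obtain ⟨sigma_eq, exists_algEquiv⟩ := sigma_tau_compatibility_general k L G σc τc H hp g h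
  refine ⟨fun x y hx _ => ?_, exists_algEquiv _ le_rfl⟩
  simpa only [inv_smul_eq_iff.2 hx.1.symm, inv_smul_eq_iff.2 hx.2.symm] using sigma_eq x y
end
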